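/- Let β ∈ ℝ be such that β/π is irrational, let α₁, α₂ ∈ ℝ with α₁ − α₂ not an integer multiple of 2π, and let k be a nonnegative integer. Then lim_{N→∞} (1/N^{k+1}) Σ_{n=1}^{N} n^k cos(α₁ n + β n²) cos(α₂ n + β n²) = 0. -/

import Mathlib

open Filter Finset

/-- Abel step. -/
lemma aux_abel (c : ℕ → ℝ) (N : ℕ) :
    ∑ n ∈ range N, ((n : ℝ) + 1) * c n
      = N * ∑ n ∈ range N, c n - ∑ m ∈ range N, ∑ n ∈ range m, c n := by
  induction N with
  | zero => simp
  | succ N ih =>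
    rw [sum_range_succ, ih, sum_range_succ (fun n => c n),
      sum_range_succ (fun m => ∑ n ∈ range m, c n)]
    push_cast
    ring

open Asymptotics in
lemma aux_weight (b : ℕ → ℝ)
    (hb : (fun N : ℕ => ∑ n ∈ range N, b n) =o[atTop] (fun N : ℕ => (N : ℝ))) (k : ℕ) :
    (fun N : ℕ => ∑ n ∈ range N, ((n : ℝ) + 1) ^ k * b n) =o[atTop]
      (fun N : ℕ => (N : ℝ) ^ (k + 1)) := by
  induction k with
  | zero => simpa using hb
  | succ k ih =>
    have e : (fun N : ℕ => ∑ n ∈ range N, ((n : ℝ) + 1) ^ (k + 1) * b n)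
        = fun N : ℕ => (N : ℝ) * (∑ n ∈ range N, ((n : ℝ) + 1) ^ k * b n)
          - ∑ m ∈ range N, ∑ n ∈ range m, ((n : ℝ) + 1) ^ k * b n := by
      funext N
      rw [← aux_abel]
      refine sum_congr rfl fun n _ => ?_
      ring
    rw [e]
    refine IsLittleO.sub ?_ ?_
    · have := (isBigO_refl (fun N : ℕ => (N : ℝ)) atTop).mul_isLittleO ih
      refine this.congr_right fun N => ?_
      ring
    · have h1 : (fun N : ℕ => ∑ m ∈ range N, ∑ n ∈ range m, ((n : ℝ) + 1) ^ k * b n)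
          =o[atTop] (fun N : ℕ => ∑ m ∈ range N, ((m : ℝ)) ^ (k + 1)) := by
        refine ih.sum_range (fun n => by positivity) ?_
        refine tendsto_atTop_mono' _ ?_
          (tendsto_atTop_add_const_right atTop (-1 : ℝ) tendsto_natCast_atTop_atTop)
        filter_upwards with N
        induction N with
        | zero => simp
        | succ N ih2 =>
          rw [sum_range_succ]
          rcases Nat.eq_zero_or_pos N with h | h
          · subst h; simp
          · have : (1 : ℝ) ≤ (N : ℝ) ^ (k + 1) := one_le_pow₀ (by exact_mod_cast h)
            push_cast
            linarith
      refine h1.trans_isBigO (IsBigO.of_bound 1 ?_)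
      filter_upwards with N
      rw [one_mul, Real.norm_of_nonneg (by positivity), Real.norm_of_nonneg (by positivity)]
      calc ∑ m ∈ range N, ((m : ℝ)) ^ (k + 1) ≤ ∑ m ∈ range N, ((N : ℝ)) ^ (k + 1) := by
            refine sum_le_sum fun m hm => ?_
            have : (m : ℝ) ≤ N := by exact_mod_cast (mem_range.1 hm).le
            gcongr
        _ = (N : ℝ) ^ (k + 1 + 1) := by simp; ring

lemma aux_geom (z : ℂ) (hz : ‖z‖ = 1) (hz1 : z ≠ 1) :
    Tendsto (fun N : ℕ => (∑ n ∈ range N, z ^ n) / (N : ℂ)) atTop (nhds 0) := by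
  have h0 : Tendsto (fun N : ℕ => (2 / ‖z - 1‖) / (N : ℝ)) atTop (nhds 0) :=
    tendsto_const_div_atTop_nhds_zero_nat _
  refine squeeze_zero_norm (fun N => ?_) h0
  rw [geom_sum_eq hz1, norm_div, norm_div, Complex.norm_natCast]
  gcongr
  calc ‖z ^ N - 1‖ ≤ ‖z ^ N‖ + ‖(1 : ℂ)‖ := norm_sub_le _ _
    _ = 2 := by rw [norm_pow, hz]; norm_num

lemma aux_shift (u : ℕ → ℂ) (hu : ∀ n, ‖u n‖ = 1) (N h : ℕ) :
    ‖∑ n ∈ range N, u (n + h) - ∑ n ∈ range N, u n‖ ≤ 2 * h := by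
  induction h with
  | zero => simp
  | succ h ih =>
    have e : ∑ n ∈ range N, u (n + (h + 1)) - ∑ n ∈ range N, u n
        = (∑ n ∈ range N, u (n + h) - ∑ n ∈ range N, u n) + (u (N + h) - u h) := by
      have h1 := sum_range_succ (fun n => u (n + h)) N
      have h2 := sum_range_succ' (fun n => u (n + h)) N
      simp only [zero_add] at h2
      have h3 : ∀ n, u (n + 1 + h) = u (n + (h + 1)) := fun n => by congr 1; ring
      simp only [h3] at h2
      linear_combination h1 - h2
    rw [e]
    refine (norm_add_le _ _).trans ?_
    have := norm_sub_le (u (N + h)) (u h)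
    rw [hu, hu] at this
    push_cast
    linarith

lemma aux_vdc_bound (u : ℕ → ℂ) (hu : ∀ n, ‖u n‖ = 1) (N H : ℕ) :
    H * ‖∑ n ∈ range N, u n‖ ≤ 2 * H ^ 2 +
      √(N * ‖∑ h ∈ range H, ∑ h' ∈ range H, ∑ n ∈ range N,
        u (n + h) * (starRingEnd ℂ) (u (n + h'))‖) := by
  set S := ∑ n ∈ range N, u n
  set T := ∑ h ∈ range H, ∑ n ∈ range N, u (n + h)
  have h1 : ‖T - H * S‖ ≤ 2 * H ^ 2 := by
    have : T - H * S = ∑ h ∈ range H, (∑ n ∈ range N, u (n + h) - S) := by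
      rw [sum_sub_distrib]; simp [T]
    rw [this]
    calc _ ≤ ∑ h ∈ range H, (2 * H : ℝ) := by
          refine norm_sum_le_of_le _ fun h hh => (aux_shift u hu N h).trans ?_
          have : (h : ℝ) ≤ H := by exact_mod_cast (mem_range.1 hh).le
          linarith
      _ = 2 * H ^ 2 := by simp; ring
  have h2 : ‖T‖ ≤ √(N * ‖∑ h ∈ range H, ∑ h' ∈ range H, ∑ n ∈ range N,
        u (n + h) * (starRingEnd ℂ) (u (n + h'))‖) := by
    apply Real.le_sqrt_of_sq_le
    have hT : T = ∑ n ∈ range N, ∑ h ∈ range H, u (n + h) := sum_comm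
    have hQ : ∑ h ∈ range H, ∑ h' ∈ range H, ∑ n ∈ range N,
        u (n + h) * (starRingEnd ℂ) (u (n + h'))
        = ((∑ n ∈ range N, ‖∑ h ∈ range H, u (n + h)‖ ^ 2 : ℝ) : ℂ) := by
      push_cast
      simp_rw [← Complex.mul_conj', map_sum, sum_mul_sum]
      symm
      rw [sum_comm]
      exact sum_congr rfl fun h _ => sum_comm
    rw [hQ, Complex.norm_real, Real.norm_of_nonneg (by positivity), hT]
    calc _ ≤ (∑ n ∈ range N, ‖∑ h ∈ range H, u (n + h)‖) ^ 2 := by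
          gcongr; exact norm_sum_le _ _
      _ ≤ _ := by simpa using sq_sum_le_card_mul_sum_sq (s := range N)
                    (f := fun n => ‖∑ h ∈ range H, u (n + h)‖)
  have h3 : ‖(H : ℂ) * S‖ ≤ ‖T - H * S‖ + ‖T‖ := by
    have := norm_sub_le T (T - H * S)
    simp only [sub_sub_cancel] at this
    linarith
  rw [norm_mul, Complex.norm_natCast] at h3
  linarith

lemma aux_vdc (u : ℕ → ℂ) (hu : ∀ n, ‖u n‖ = 1)
    (hc : ∀ h h' : ℕ, h ≠ h' → Tendsto (fun N : ℕ =>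
      (∑ n ∈ range N, u (n + h) * (starRingEnd ℂ) (u (n + h'))) / (N : ℂ)) atTop (nhds 0)) :
    Tendsto (fun N : ℕ => (∑ n ∈ range N, u n) / (N : ℂ)) atTop (nhds 0) := by
  have hd : ∀ h h' : ℕ, Tendsto (fun N : ℕ =>
      (∑ n ∈ range N, u (n + h) * (starRingEnd ℂ) (u (n + h'))) / (N : ℂ)) atTop
        (nhds (if h = h' then 1 else 0)) := by
    intro h h'
    split_ifs with e
    · subst e
      refine tendsto_const_nhds.congr' ?_
      filter_upwards [eventually_gt_atTop 0] with N hN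
      have : (N : ℂ) ≠ 0 := by exact_mod_cast hN.ne'
      simp [Complex.mul_conj', hu, this]
    · exact hc h h' e
  have key : ∀ H : ℕ, 0 < H → ∀ᶠ N : ℕ in atTop,
      ‖(∑ n ∈ range N, u n) / (N : ℂ)‖ < 2 * (√H / H) := by
    intro H hH
    have hH' : (0 : ℝ) < H := by exact_mod_cast hH
    have t1 : Tendsto (fun N : ℕ => ∑ h ∈ range H, ∑ h' ∈ range H,
        (∑ n ∈ range N, u (n + h) * (starRingEnd ℂ) (u (n + h'))) / (N : ℂ)) atTop
        (nhds (∑ h ∈ range H, ∑ h' ∈ range H, if h = h' then 1 else 0)) :=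
      tendsto_finsetSum _ fun h _ => tendsto_finsetSum _ fun h' _ => hd h h'
    have e1 : (∑ h ∈ range H, ∑ h' ∈ range H, if h = h' then (1 : ℂ) else 0) = H := by
      rw [sum_congr rfl (g := fun _ => (1 : ℂ))]
      · simp
      · intro h hh
        simp [mem_range.1 hh]
    rw [e1] at t1
    have t2 := (t1.norm.sqrt)
    rw [Complex.norm_natCast] at t2
    have t3 : Tendsto (fun N : ℕ => (2 * (H : ℝ) ^ 2) / (N : ℝ)) atTop (nhds 0) :=
      tendsto_const_div_atTop_nhds_zero_nat _
    have t4 := (t3.add t2).div_const (H : ℝ)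
    rw [zero_add] at t4
    have hlt : √(H : ℝ) / H < 2 * (√H / H) := by
      have : 0 < √(H : ℝ) / H := by positivity
      linarith
    filter_upwards [t4.eventually_lt_const hlt, eventually_gt_atTop 0] with N hN hN0
    refine lt_of_le_of_lt ?_ hN
    have hN' : (0 : ℝ) < N := by exact_mod_cast hN0
    have b := aux_vdc_bound u hu N H
    simp_rw [← sum_div]
    rw [norm_div, norm_div, Complex.norm_natCast]
    set Q := ‖∑ h ∈ range H, ∑ h' ∈ range H, ∑ n ∈ range N,
        u (n + h) * (starRingEnd ℂ) (u (n + h'))‖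
    have e2 : √(N * Q) = N * √(Q / N) := by
      have : (N : ℝ) * Q = N ^ 2 * (Q / N) := by field_simp
      rw [this, Real.sqrt_mul (by positivity), Real.sqrt_sq hN'.le]
    rw [e2] at b
    rw [le_div_iff₀ hH', div_mul_eq_mul_div, div_le_iff₀ hN', add_mul, div_mul_cancel₀ _ hN'.ne']
    linarith
  rw [tendsto_zero_iff_norm_tendsto_zero, Metric.tendsto_atTop']
  have hs : Tendsto (fun H : ℕ => 2 * (√(H : ℝ) / H)) atTop (nhds 0) := by
    have : Tendsto (fun H : ℕ => (√(H : ℝ))⁻¹) atTop (nhds 0) :=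
      (Real.tendsto_sqrt_atTop.comp tendsto_natCast_atTop_atTop).inv_tendsto_atTop
    simpa [Real.sqrt_div_self] using this.const_mul 2
  intro ε hε
  obtain ⟨H, hH1, hH2⟩ := ((hs.eventually_lt_const hε).and (eventually_gt_atTop 0)).exists
  obtain ⟨n, hn⟩ := eventually_atTop.1 (key H hH2)
  refine ⟨n, fun m hm => ?_⟩
  rw [dist_zero_right, norm_norm]
  exact (hn m hm.le).trans hH1

lemma aux_exp_ne (x : ℝ) (hx : ∀ m : ℤ, x ≠ 2 * Real.pi * m) :
    Complex.exp (x * Complex.I) ≠ 1 := by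
  intro h
  obtain ⟨m, hm⟩ := Complex.exp_eq_one_iff.1 h
  apply hx m
  have : (x : ℂ) = ((2 * Real.pi * m : ℝ) : ℂ) := by
    apply mul_right_cancel₀ Complex.I_ne_zero
    rw [hm]; push_cast; ring
  exact_mod_cast this

lemma aux_lin (x c : ℝ) (hx : ∀ m : ℤ, x ≠ 2 * Real.pi * m) :
    Tendsto (fun N : ℕ => (∑ n ∈ range N, Complex.exp (((x * n + c : ℝ) : ℂ) * Complex.I)) / (N : ℂ))
      atTop (nhds 0) := by
  have := (aux_geom (Complex.exp (x * Complex.I)) (Complex.norm_exp_ofReal_mul_I x)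
    (aux_exp_ne x hx)).const_mul (Complex.exp (c * Complex.I))
  rw [mul_zero] at this
  refine this.congr fun N => ?_
  rw [← mul_div_assoc, mul_sum]
  congr 1
  refine sum_congr rfl fun n _ => ?_
  rw [← Complex.exp_nat_mul, ← Complex.exp_add]
  congr 1
  push_cast; ring

lemma aux_quad (β γ : ℝ) (hβ : Irrational (β / Real.pi)) :
    Tendsto (fun N : ℕ => (∑ n ∈ range N,
      Complex.exp (((γ * (n + 1 : ℕ) + 2 * β * ((n + 1 : ℕ) : ℝ) ^ 2 : ℝ) : ℂ) * Complex.I)) / (N : ℂ))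
      atTop (nhds 0) := by
  refine aux_vdc _ (fun n => Complex.norm_exp_ofReal_mul_I _) fun h h' hh => ?_
  have hne : ∀ m : ℤ, 4 * β * ((h : ℝ) - h') ≠ 2 * Real.pi * m := by
    intro m hm
    have hd : (h : ℝ) - h' ≠ 0 := sub_ne_zero.2 (by exact_mod_cast hh)
    apply hβ
    refine ⟨(m : ℚ) / (2 * ((h : ℚ) - h')), ?_⟩
    push_cast
    have := Real.pi_ne_zero
    field_simp
    linarith
  refine (aux_lin _ (γ * ((h : ℝ) - h') + 2 * β * (((h : ℝ) + 1) ^ 2 - ((h' : ℝ) + 1) ^ 2)) hne).congr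
    fun N => ?_
  congr 1
  refine sum_congr rfl fun n _ => ?_
  rw [← Complex.exp_conj, ← Complex.exp_add]
  congr 1
  rw [map_mul, Complex.conj_ofReal, Complex.conj_I]
  push_cast; ring

lemma aux_re (f : ℕ → ℝ)
    (h : Tendsto (fun N : ℕ => (∑ n ∈ range N, Complex.exp ((f n : ℂ) * Complex.I)) / (N : ℂ))
      atTop (nhds 0)) :
    Tendsto (fun N : ℕ => (∑ n ∈ range N, Real.cos (f n)) / (N : ℝ)) atTop (nhds 0) := by
  have := (Complex.continuous_re.tendsto 0).comp h
  rw [Complex.zero_re] at this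
  refine this.congr fun N => ?_
  simp only [Function.comp]
  rw [Complex.div_natCast_re, Complex.re_sum]
  simp only [Complex.exp_ofReal_mul_I_re]

/-- Cross-term chirp limit: components with the same chirp rate but distinct frequencies have
asymptotically vanishing normalized interaction. -/
theorem statement_6 (β : ℝ) (hβ : Irrational (β / Real.pi)) (α₁ α₂ : ℝ)
    (hα : ∀ m : ℤ, α₁ - α₂ ≠ 2 * Real.pi * m) (k : ℕ) :
    Tendsto (fun N : ℕ =>
        (1 / (N : ℝ) ^ (k + 1)) *
          ∑ n ∈ Finset.Icc 1 N,
            (n : ℝ) ^ k * Real.cos (α₁ * n + β * n ^ 2) * Real.cos (α₂ * n + β * n ^ 2))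
      atTop (nhds 0) := by
  have h1 := aux_re _ (aux_lin (α₁ - α₂) (α₁ - α₂) hα)
  have h2 := aux_re _ (aux_quad β (α₁ + α₂) hβ)
  have h3 := (h1.add h2).const_mul (1 / 2)
  simp only [add_zero, mul_zero] at h3
  let b : ℕ → ℝ := fun n => Real.cos (α₁ * (n + 1 : ℕ) + β * ((n + 1 : ℕ) : ℝ) ^ 2) *
    Real.cos (α₂ * (n + 1 : ℕ) + β * ((n + 1 : ℕ) : ℝ) ^ 2)
  have h4 : Tendsto (fun N : ℕ => (∑ n ∈ range N, b n) / (N : ℝ)) atTop (nhds 0) := by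
    refine h3.congr fun N => ?_
    rw [← add_div, ← sum_add_distrib, ← mul_div_assoc, mul_sum]
    congr 1
    refine sum_congr rfl fun n _ => ?_
    have := Real.two_mul_cos_mul_cos (α₁ * (n + 1 : ℕ) + β * ((n + 1 : ℕ) : ℝ) ^ 2)
      (α₂ * (n + 1 : ℕ) + β * ((n + 1 : ℕ) : ℝ) ^ 2)
    have e1 : (α₁ - α₂) * n + (α₁ - α₂) = (α₁ * (n + 1 : ℕ) + β * ((n + 1 : ℕ) : ℝ) ^ 2) -
      (α₂ * (n + 1 : ℕ) + β * ((n + 1 : ℕ) : ℝ) ^ 2) := by push_cast; ring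
    have e2 : (α₁ + α₂) * (n + 1 : ℕ) + 2 * β * ((n + 1 : ℕ) : ℝ) ^ 2
      = (α₁ * (n + 1 : ℕ) + β * ((n + 1 : ℕ) : ℝ) ^ 2) +
      (α₂ * (n + 1 : ℕ) + β * ((n + 1 : ℕ) : ℝ) ^ 2) := by ring
    rw [e1, e2, ← this]
    simp only [b]
    ring
  have h5 : (fun N : ℕ => ∑ n ∈ range N, b n) =o[atTop] (fun N : ℕ => (N : ℝ)) := by
    rw [Asymptotics.isLittleO_iff_tendsto]
    · exact h4
    · intro N hN
      have : N = 0 := by exact_mod_cast hN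
      simp [this]
  refine (aux_weight b h5 k).tendsto_div_nhds_zero.congr fun N => ?_
  rw [div_eq_inv_mul, one_div]
  congr 1
  rw [range_eq_Ico, ← Finset.Ico_add_one_right_eq_Icc,
    ← Finset.sum_Ico_add' (fun n : ℕ => (n : ℝ) ^ k * Real.cos (α₁ * n + β * n ^ 2) *
      Real.cos (α₂ * n + β * n ^ 2)) 0 N 1]
  refine sum_congr rfl fun n _ => ?_
  simp only [b]
  push_cast
  ring
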